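/- Let L/k be an extension of G-graded fields, A ⊆ L an integrally closed graded k-subalgebra (a graded domain integrally closed in its own graded fraction field), T = {T_i} a set of homogeneous elements of L^× algebraically independent over A, and F = Frac_G(k[T]) ⊆ L the graded fraction field of the graded k-subalgebra generated by the T_i. Then the graded subring F·A ⊆ L generated by F and A is integrally closed. -/

import Mathlib

universe u v

/-- A `G`-graded commutative ring structure on `A`: graded pieces `deg g`,
multiplicativity of the grading, and an internal direct sum decomposition
recorded by the homogeneous-component function `comp`. -/
structure GradedStr (G : Type u) [CommGroup G] (A : Type v) [CommRing A] where
  deg : G → AddSubgroup A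
  one_mem : (1 : A) ∈ deg 1
  mul_mem : ∀ {g h : G} {a b : A}, a ∈ deg g → b ∈ deg h → a * b ∈ deg (g * h)
  comp : A → G → A
  comp_mem : ∀ a g, comp a g ∈ deg g
  comp_add : ∀ a b g, comp (a + b) g = comp a g + comp b g
  comp_of_mem : ∀ {a : A} {g : G}, a ∈ deg g → comp a g = a
  comp_of_mem_ne : ∀ {a : A} {g g' : G}, a ∈ deg g → g' ≠ g → comp a g' = 0
  finite_support : ∀ a : A, (Function.support (comp a)).Finite
  sum_comp : ∀ a : A, ∑ᶠ g, comp a g = a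

namespace GradedStr

variable {G : Type u} [CommGroup G] {A : Type v} [CommRing A]

/-- `a` is homogeneous: it lies in some graded piece. -/
def IsHomog (𝒜 : GradedStr G A) (a : A) : Prop := ∃ g, a ∈ 𝒜.deg g

/-- A `G`-graded field: a nonzero graded ring in which every nonzero homogeneous
element is invertible. -/
def IsGradedField (𝒜 : GradedStr G A) : Prop :=
  Nontrivial A ∧ ∀ a : A, 𝒜.IsHomog a → a ≠ 0 → IsUnit a

/-- A graded subring: a subring stable under taking homogeneous components. -/
def IsGradedSubring (𝒜 : GradedStr G A) (S : Subring A) : Prop :=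
  ∀ x ∈ S, ∀ g, 𝒜.comp x g ∈ S

/-- A graded subfield of a graded field: a graded subring containing the inverses of
its nonzero homogeneous elements. -/
def IsGradedSubfield (𝒜 : GradedStr G A) (S : Subring A) : Prop :=
  𝒜.IsGradedSubring S ∧ ∀ x ∈ S, 𝒜.IsHomog x → x ≠ 0 → Ring.inverse x ∈ S

/-- The additive subgroup of homogeneous polynomials of grading `h` in `K[g₀⁻¹ T]`,
the polynomial ring in which `T` is declared homogeneous of grading `g₀`: the
coefficient of `T^n` must be homogeneous of grading `h * g₀⁻ⁿ`. -/
def polyDeg (𝒜 : GradedStr G A) (g₀ h : G) : AddSubgroup (Polynomial A) where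
  carrier := {p | ∀ n : ℕ, p.coeff n ∈ 𝒜.deg (h * (g₀ ^ n)⁻¹)}
  zero_mem' := by intro n; simpa using (𝒜.deg (h * (g₀ ^ n)⁻¹)).zero_mem
  add_mem' := by
    intro p q hp hq n
    rw [Polynomial.coeff_add]
    exact (𝒜.deg _).add_mem (hp n) (hq n)
  neg_mem' := by
    intro p hp n
    rw [Polynomial.coeff_neg]
    exact (𝒜.deg _).neg_mem (hp n)

/-- A homogeneous polynomial in `K[g₀⁻¹T]`. -/
def IsHomogPoly (𝒜 : GradedStr G A) (g₀ : G) (p : Polynomial A) : Prop :=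
  ∃ h, p ∈ 𝒜.polyDeg g₀ h

/-- The graded fraction field of a graded subring of a graded field, computed inside
the ambient graded field: the subring generated by `S` together with the inverses of
the nonzero homogeneous elements of `S`. -/
def fracIn (𝒜 : GradedStr G A) (S : Subring A) : Subring A :=
  Subring.closure (↑S ∪ {y : A | ∃ x ∈ S, x ≠ 0 ∧ 𝒜.IsHomog x ∧ y = Ring.inverse x})

end GradedStr

/-- `x` is integral over the subring `S` (satisfies a monic polynomial equation with
coefficients in `S`). -/
def IntegralOver {A : Type v} [CommRing A] (S : Subring A) (x : A) : Prop :=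
  ∃ p : Polynomial A, p.Monic ∧ (∀ n, p.coeff n ∈ S) ∧ Polynomial.eval x p = 0

/-- Algebraic independence of a family of elements over a subring: the evaluation map
from the (multivariate) polynomial ring is injective.  (For homogeneous elements this
is graded algebraic independence, the grading playing no role in injectivity.) -/
def AlgIndepOver {A : Type v} [CommRing A] {ι : Type*} (S : Subring A) (T : ι → A) : Prop :=
  Function.Injective (MvPolynomial.eval₂Hom S.subtype T)

/-- A graded valuation ring of the graded subfield `F` of the ambient graded field:
a graded subring `O ⊆ F` such that every nonzero homogeneous element `f` of `F`
satisfies `f ∈ O` or `f⁻¹ ∈ O`. -/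
def IsGVRofSubfield {G : Type u} [CommGroup G] {A : Type v} [CommRing A]
    (𝒜 : GradedStr G A) (F : Subring A) (O : Subring A) : Prop :=
  O ≤ F ∧ 𝒜.IsGradedSubring O ∧
    ∀ f ∈ F, f ≠ 0 → 𝒜.IsHomog f → f ∈ O ∨ Ring.inverse f ∈ O

section Statement12

variable {G : Type u} [CommGroup G] {L : Type v} [CommRing L]

/-- A graded subring `C` of the ambient graded field `L` is integrally closed (in its
graded fraction field, computed inside `L`): every homogeneous element `x` of `L`
that is a ratio of homogeneous elements of `C` and is integral over `C` already lies
in `C`. -/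
def GIntegrallyClosedIn (𝒜 : GradedStr G L) (C : Subring L) : Prop :=
  ∀ x : L, 𝒜.IsHomog x →
    (∃ a ∈ C, ∃ b ∈ C, 𝒜.IsHomog a ∧ 𝒜.IsHomog b ∧ b ≠ 0 ∧ x * b = a) →
    IntegralOver C x → x ∈ C

/-! Being generated by `A`, the `T_i` and inverses of nonzero homogeneous elements, `F·A` is a
localization of `A[T]`, and a homogeneous element integral over a localization becomes integral
over the original ring after multiplication by a denominator. So it suffices that `A[T]` is
integrally closed, and since an integrality relation involves finitely many `T_i`, that `B[t]` is
integrally closed whenever the graded ring `B` is and `t` is transcendental over `B`.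

Let `K` be the graded fraction field of `B` and let the homogeneous fraction `x` be integral over
`B[t]`. All powers of `x` then have a common homogeneous denominator `c(t)` with coefficients in
`K`. Dividing `c(t) x` by `c(t)` in `K[t]` produces a smaller common denominator, until `x` itself
lies in `K[t]`. The coefficients of a polynomial that is integral over `B[t]` are integral over
`B`, so those of `x` lie in `B`. -/

section Localization

variable {R : Type*} [CommRing R]

/-- The localization of `R` at `M` formed inside an `R`-algebra `E`: the elements of `E` that land
in the image of `R` after multiplication by some element of `M`. It is an honest localization when
`R → E` is injective and `M` is mapped to units. -/
def localizationIn (E : Type*) [CommRing E] [Algebra R E] (M : Submonoid R) : Subalgebra R E where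
  carrier := {x | ∃ s ∈ M, s • x ∈ (⊥ : Subalgebra R E)}
  mul_mem' := by
    rintro x y ⟨s, hs, hx⟩ ⟨s', hs', hy⟩
    exact ⟨s * s', mul_mem hs hs', by simpa only [smul_mul_smul_comm] using mul_mem hx hy⟩
  add_mem' := by
    rintro x y ⟨s, hs, hx⟩ ⟨s', hs', hy⟩
    refine ⟨s * s', mul_mem hs hs', ?_⟩
    rw [smul_add, mul_comm s, mul_smul, mul_comm s', mul_smul]
    exact add_mem (Subalgebra.smul_mem _ hx _) (Subalgebra.smul_mem _ hy _)
  algebraMap_mem' r := ⟨1, one_mem _, by simp⟩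

variable {E : Type*} [CommRing E] [Algebra R E] {M : Submonoid R}

theorem mem_localizationIn {x : E} :
    x ∈ localizationIn E M ↔ ∃ s ∈ M, ∃ r : R, algebraMap R E s * x = algebraMap R E r := by
  simp only [← Algebra.smul_def, eq_comm (b := algebraMap R E _)]
  rfl

theorem localizationIn_toSubring_eq_closure (hM : ∀ s ∈ M, IsUnit (algebraMap R E s)) :
    (localizationIn E M).toSubring = Subring.closure
      (Set.range (algebraMap R E) ∪ Ring.inverse '' (M.map (algebraMap R E))) := by
  refine le_antisymm (fun x hx => ?_) (Subring.closure_le.2 ?_)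
  · obtain ⟨s, hs, r, hr⟩ := mem_localizationIn.1 hx
    rw [← Ring.inverse_mul_cancel_left _ x (hM s hs), hr]
    exact mul_mem (Subring.subset_closure (.inr ⟨_, ⟨s, hs, rfl⟩, rfl⟩))
      (Subring.subset_closure (.inl ⟨r, rfl⟩))
  · rintro _ (⟨r, rfl⟩ | ⟨_, ⟨s, hs, rfl⟩, rfl⟩)
    · exact (localizationIn E M).algebraMap_mem r
    · exact mem_localizationIn.2 ⟨s, hs, 1, by
        rw [map_one]; exact Ring.mul_inverse_cancel _ (hM s hs)⟩

theorem isLocalization_localizationIn [FaithfulSMul R E]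
    (hM : ∀ s ∈ M, IsUnit (algebraMap R E s)) : IsLocalization M (localizationIn E M) where
  map_units s := by
    have hinv : Ring.inverse (algebraMap R E s) ∈ localizationIn E M :=
      mem_localizationIn.2 ⟨s, s.2, 1, by
        rw [map_one]; exact Ring.mul_inverse_cancel _ (hM s s.2)⟩
    exact IsUnit.of_mul_eq_one ⟨_, hinv⟩ (Subtype.ext (Ring.mul_inverse_cancel _ (hM s s.2)))
  surj x := by
    obtain ⟨s, hs, r, hr⟩ := mem_localizationIn.1 x.2
    exact ⟨(r, ⟨s, hs⟩), Subtype.ext ((mul_comm _ _).trans hr)⟩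
  exists_of_eq h :=
    ⟨1, congrArg _ (FaithfulSMul.algebraMap_injective R E (congrArg Subtype.val h))⟩

theorem exists_forall_smul_pow_mem_of_isIntegral {x : E} (hx : x ∈ localizationIn E M)
    (hi : IsIntegral R x) : ∃ s ∈ M, ∀ n : ℕ, s • x ^ n ∈ (⊥ : Subalgebra R E) := by
  obtain ⟨Y, hY⟩ := hi.fg_adjoin_singleton
  have hYM : ∀ y ∈ Y, y ∈ localizationIn E M := fun y hy =>
    Algebra.adjoin_le (Set.singleton_subset_iff.2 hx) (hY.le (Submodule.subset_span hy))
  choose! s hsM hs using hYM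
  refine ⟨∏ y ∈ Y, s y, prod_mem hsM, fun n => ?_⟩
  have hspan : Submodule.span R Y ≤ (⊥ : Subalgebra R E).toSubmodule.comap
      (LinearMap.lsmul R E (∏ y ∈ Y, s y)) := by
    refine Submodule.span_le.2 fun y hy => ?_
    obtain ⟨c, hc⟩ := Finset.dvd_prod_of_mem s hy
    change (∏ y ∈ Y, s y) • y ∈ (⊥ : Subalgebra R E)
    rw [hc, mul_comm, mul_smul]
    exact Subalgebra.smul_mem _ (hs y hy) c
  exact hspan (hY.ge (pow_mem (Algebra.self_mem_adjoin_singleton R x) n))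

end Localization

section PolynomialExtension

open Polynomial

variable {R S E : Type*} [CommRing R] [CommRing S] [CommRing E] [Algebra R S] [Algebra S E]
  [Algebra R E] [IsScalarTower R S E] {t : E}

theorem exists_eq_mul_add_degree_lt [Nontrivial R] {c : R[X]} (hc : IsUnit c.leadingCoeff)
    (f : R[X]) : ∃ q r : R[X], f = c * q + r ∧ r.degree < c.degree := by
  have hmonic := monic_of_isUnit_leadingCoeff_inv_smul hc
  refine ⟨hc.unit⁻¹ • (f /ₘ (hc.unit⁻¹ • c)), f %ₘ (hc.unit⁻¹ • c), ?_,
    (degree_modByMonic_lt f hmonic).trans_le (degree_smul_le _ _)⟩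
  rw [mul_smul_comm, ← smul_mul_assoc, add_comm, modByMonic_add_div]

theorem transcendental_of_isLocalization (M : Submonoid R) [IsLocalization M S]
    (ht : Transcendental R t) : Transcendental S t := by
  rw [transcendental_iff] at ht ⊢
  intro p hp
  obtain ⟨s, hsM, hs⟩ := IsLocalization.integerNormalization_spec M p
  rw [ht _ (IsLocalization.integerNormalization_aeval_eq_zero M p hp), Polynomial.map_zero,
    Algebra.smul_def] at hs
  exact ((IsLocalization.map_units S ⟨s, hsM⟩).map C).mul_right_eq_zero.1 hs.symm

theorem isIntegral_coeff_of_isIntegral_aeval (ht : Transcendental S t) {p : S[X]}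
    (hp : IsIntegral (Algebra.adjoin R {t}) (aeval t p)) (n : ℕ) : IsIntegral R (p.coeff n) := by
  let ev := aeval (R := R) (⟨t, Algebra.self_mem_adjoin_singleton R t⟩ : Algebra.adjoin R {t})
  have ev_coe (f : R[X]) : aeval t f = (ev f : E) :=
    Subalgebra.aeval_coe _ ⟨t, _⟩ f
  have ev_surjective : Function.Surjective ev := by
    rintro ⟨y, hy⟩
    rw [Algebra.adjoin_singleton_eq_range_aeval] at hy
    exact hy.imp fun f hf => Subtype.ext ((ev_coe f).symm.trans hf)
  have hpR : (aeval (R := R) t).toRingHom.IsIntegralElem (aeval t p) := by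
    let := ev.toAlgebra
    let := (aeval (R := R) t).toAlgebra
    have : IsScalarTower R[X] (Algebra.adjoin R {t}) E := .of_algebraMap_eq ev_coe
    have : Algebra.IsIntegral R[X] (Algebra.adjoin R {t}) :=
      .of_surjective (Algebra.ofId _ _) ev_surjective
    exact isIntegral_trans _ hp
  have hcomp : (aeval (R := S) t).toRingHom.comp (mapRingHom (algebraMap R S)) =
      (aeval (R := R) t).toRingHom := by
    ext <;> simp [← IsScalarTower.algebraMap_apply]
  exact IsIntegral.coeff (RingHom.IsIntegralElem.of_map (g := (aeval (R := S) t).toRingHom)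
    (transcendental_iff_injective.1 ht) (hcomp ▸ hpR)) n

end PolynomialExtension

namespace GradedStr

variable (𝒜 : GradedStr G L)

/-- The projection of `L` onto its part of grading `g`, as an additive map. -/
def compHom (g : G) : L →+ L := AddMonoidHom.mk' (𝒜.comp · g) (𝒜.comp_add · · g)

theorem comp_zero (g : G) : 𝒜.comp 0 g = 0 := (𝒜.compHom g).map_zero

theorem comp_neg (x : L) (g : G) : 𝒜.comp (-x) g = -𝒜.comp x g := (𝒜.compHom g).map_neg x

theorem comp_sub (x y : L) (g : G) : 𝒜.comp (x - y) g = 𝒜.comp x g - 𝒜.comp y g :=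
  (𝒜.compHom g).map_sub x y

theorem comp_sum {ι : Type*} (s : Finset ι) (f : ι → L) (g : G) :
    𝒜.comp (∑ i ∈ s, f i) g = ∑ i ∈ s, 𝒜.comp (f i) g :=
  map_sum (𝒜.compHom g) f s

theorem sum_support_comp (x : L) : ∑ g ∈ (𝒜.finite_support x).toFinset, 𝒜.comp x g = x :=
  (finsum_eq_sum _ (𝒜.finite_support x)).symm.trans (𝒜.sum_comp x)

variable {𝒜}

theorem comp_mul_of_mem {a : L} {g : G} (ha : a ∈ 𝒜.deg g) (y : L) (h : G) :
    𝒜.comp (a * y) h = a * 𝒜.comp y (g⁻¹ * h) := by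
  conv_lhs => rw [← 𝒜.sum_support_comp y, Finset.mul_sum, comp_sum]
  rw [Finset.sum_eq_single (g⁻¹ * h)]
  · exact 𝒜.comp_of_mem (by simpa using 𝒜.mul_mem ha (𝒜.comp_mem y (g⁻¹ * h)))
  · intro i _ hi
    refine 𝒜.comp_of_mem_ne (𝒜.mul_mem ha (𝒜.comp_mem y i)) ?_
    rintro rfl
    exact hi (inv_mul_cancel_left g i).symm
  · intro hy
    rw [show 𝒜.comp y (g⁻¹ * h) = 0 by simpa using hy, mul_zero, comp_zero]

theorem comp_mul (x y : L) (h : G) : 𝒜.comp (x * y) h =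
    ∑ g ∈ (𝒜.finite_support x).toFinset, 𝒜.comp x g * 𝒜.comp y (g⁻¹ * h) := by
  conv_lhs => rw [← 𝒜.sum_support_comp x, Finset.sum_mul, comp_sum]
  exact Finset.sum_congr rfl fun g _ => comp_mul_of_mem (𝒜.comp_mem x g) y h

theorem inverse_mem {a : L} {g : G} (ha : a ∈ 𝒜.deg g) (hu : IsUnit a) :
    Ring.inverse a ∈ 𝒜.deg g⁻¹ := by
  have hcomp : a * Ring.inverse a = a * 𝒜.comp (Ring.inverse a) g⁻¹ := by
    conv_rhs => rw [← mul_one g⁻¹, ← comp_mul_of_mem ha, Ring.mul_inverse_cancel a hu,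
      𝒜.comp_of_mem 𝒜.one_mem]
    exact Ring.mul_inverse_cancel a hu
  exact hu.mul_left_cancel hcomp ▸ 𝒜.comp_mem _ _

theorem pow_mem {a : L} {g : G} (ha : a ∈ 𝒜.deg g) (n : ℕ) : a ^ n ∈ 𝒜.deg (g ^ n) := by
  induction n with
  | zero => simpa only [pow_zero] using 𝒜.one_mem
  | succ n ih => simpa only [pow_succ] using 𝒜.mul_mem ih ha

theorem IsHomog.mul {a b : L} (ha : 𝒜.IsHomog a) (hb : 𝒜.IsHomog b) : 𝒜.IsHomog (a * b) :=
  let ⟨_, ha⟩ := ha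
  let ⟨_, hb⟩ := hb
  ⟨_, 𝒜.mul_mem ha hb⟩

theorem IsHomog.inverse {a : L} (ha : 𝒜.IsHomog a) (hu : IsUnit a) : 𝒜.IsHomog (Ring.inverse a) :=
  let ⟨_, ha⟩ := ha
  ⟨_, inverse_mem ha hu⟩

theorem IsHomog.comp_mem {S : Subring L} {a : L} (ha : 𝒜.IsHomog a) (haS : a ∈ S) (g : G) :
    𝒜.comp a g ∈ S := by
  obtain ⟨h, ha⟩ := ha
  obtain rfl | hne := eq_or_ne g h
  · rwa [𝒜.comp_of_mem ha]
  · rw [𝒜.comp_of_mem_ne ha hne]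
    exact S.zero_mem

theorem isGradedSubring_closure {s : Set L}
    (hs : ∀ x ∈ s, ∀ g, 𝒜.comp x g ∈ Subring.closure s) :
    𝒜.IsGradedSubring (Subring.closure s) := by
  intro x hx
  induction hx using Subring.closure_induction with
  | mem x hx => exact hs x hx
  | zero => exact fun g => (𝒜.comp_zero g).symm ▸ Subring.zero_mem _
  | one => exact IsHomog.comp_mem ⟨1, 𝒜.one_mem⟩ (Subring.one_mem _)
  | add x y _ _ hx hy => exact fun g => (𝒜.comp_add x y g).symm ▸ add_mem (hx g) (hy g)
  | neg x _ hx => exact fun g => (𝒜.comp_neg x g).symm ▸ neg_mem (hx g)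
  | mul x y _ _ hx hy =>
    intro g
    rw [comp_mul]
    exact sum_mem fun i _ => Subring.mul_mem _ (hx i) (hy _)

theorem IsGradedSubring.adjoin {B : Subring L} (hB : 𝒜.IsGradedSubring B) {s : Set L}
    (hs : ∀ t ∈ s, 𝒜.IsHomog t) : 𝒜.IsGradedSubring (Algebra.adjoin B s).toSubring := by
  rw [Algebra.adjoin_eq_ring_closure]
  refine isGradedSubring_closure ?_
  rintro _ (⟨b, rfl⟩ | hx) g
  · exact Subring.subset_closure (.inl ⟨⟨_, hB b b.2 g⟩, rfl⟩)
  · exact (hs _ hx).comp_mem (Subring.subset_closure (.inr hx)) g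

variable (𝒜) in
/-- The homogeneous elements of the subring `B` that are invertible in the ambient ring. In a graded
field these are the nonzero homogeneous elements of `B`, the denominators of `𝒜.fracIn B`. -/
def homogUnits (B : Subring L) : Submonoid B where
  carrier := {b | 𝒜.IsHomog (b : L) ∧ IsUnit (b : L)}
  one_mem' := ⟨⟨1, 𝒜.one_mem⟩, isUnit_one⟩
  mul_mem' ha hb := ⟨ha.1.mul hb.1, ha.2.mul hb.2⟩

theorem fracIn_eq_localizationIn (hL : 𝒜.IsGradedField) (B : Subring L) :
    𝒜.fracIn B = (localizationIn L (𝒜.homogUnits B)).toSubring := by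
  have := hL.1
  rw [localizationIn_toSubring_eq_closure fun s (hs : s ∈ 𝒜.homogUnits B) => hs.2, fracIn]
  congr! 2
  · exact Subtype.range_coe.symm
  · ext y
    constructor
    · rintro ⟨x, hxB, hx0, hx, rfl⟩
      exact ⟨x, ⟨⟨x, hxB⟩, ⟨hx, hL.2 x hx hx0⟩, rfl⟩, rfl⟩
    · rintro ⟨_, ⟨x, hx, rfl⟩, rfl⟩
      exact ⟨x, x.2, hx.2.ne_zero, hx.1, rfl⟩

theorem mem_fracIn (hL : 𝒜.IsGradedField) {B : Subring L} {x : L} :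
    x ∈ 𝒜.fracIn B ↔ ∃ s ∈ B, 𝒜.IsHomog s ∧ IsUnit s ∧ s * x ∈ B := by
  rw [fracIn_eq_localizationIn hL, Subalgebra.mem_toSubring, mem_localizationIn]
  constructor
  · rintro ⟨s, hs, r, hr⟩
    exact ⟨s, s.2, hs.1, hs.2, (hr ▸ r.2 : (s : L) * x ∈ B)⟩
  · rintro ⟨s, hsB, hs, hu, hsx⟩
    exact ⟨⟨s, hsB⟩, ⟨hs, hu⟩, ⟨_, hsx⟩, rfl⟩

theorem le_fracIn (B : Subring L) : B ≤ 𝒜.fracIn B :=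
  fun _ hx => Subring.subset_closure (.inl hx)

theorem IsGradedSubring.fracIn (hL : 𝒜.IsGradedField) {B : Subring L}
    (hB : 𝒜.IsGradedSubring B) : 𝒜.IsGradedSubfield (𝒜.fracIn B) := by
  refine ⟨isGradedSubring_closure ?_, ?_⟩
  · rintro x (hx | ⟨s, hs, hs0, hsh, rfl⟩) g
    · exact Subring.subset_closure (.inl (hB x hx g))
    · exact (hsh.inverse (hL.2 s hsh hs0)).comp_mem
        (Subring.subset_closure (.inr ⟨s, hs, hs0, hsh, rfl⟩)) g
  · intro x hx hxh hx0
    have hxu := hL.2 x hxh hx0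
    obtain ⟨s, hsB, hsh, hsu, hsx⟩ := (mem_fracIn hL).1 hx
    refine (mem_fracIn hL).2 ⟨s * x, hsx, hsh.mul hxh, hsu.mul hxu, ?_⟩
    rwa [mul_assoc, Ring.mul_inverse_cancel x hxu, mul_one]

end GradedStr

section Integrality

variable {𝒜 : GradedStr G L} {C : Subring L}

open Polynomial in
theorem integralOver_iff {x : L} : IntegralOver C x ↔ IsIntegral C x := by
  constructor
  · rintro ⟨p, hp, hpC, hpx⟩
    obtain ⟨q, rfl, -, hq⟩ := lifts_and_natDegree_eq_and_monic
      ((lifts_iff_coeff_lifts (f := C.subtype) p).2 fun n => ⟨⟨_, hpC n⟩, rfl⟩) hp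
    exact ⟨q, hq, (eval_map _ _).symm.trans hpx⟩
  · rintro ⟨q, hq, hqx⟩
    exact ⟨q.map C.subtype, hq.map _, fun n => coeff_map C.subtype n ▸ (q.coeff n).2,
      (eval_map _ _).trans hqx⟩

theorem gIntegrallyClosedIn_iff (hL : 𝒜.IsGradedField) : GIntegrallyClosedIn 𝒜 C ↔
    ∀ x, 𝒜.IsHomog x → x ∈ 𝒜.fracIn C → IntegralOver C x → x ∈ C := by
  have := hL.1
  refine forall₂_congr fun x hx => imp_congr_left ?_
  rw [GradedStr.mem_fracIn hL]
  constructor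
  · rintro ⟨_, ha, b, hbC, -, hb, hb0, rfl⟩
    exact ⟨b, hbC, hb, hL.2 b hb hb0, mul_comm x b ▸ ha⟩
  · rintro ⟨s, hsC, hs, hsu, hsx⟩
    exact ⟨s * x, hsx, s, hsC, hs.mul hx, hs, hsu.ne_zero, mul_comm x s⟩

theorem IntegralOver.exists_homog_forall_mul_pow_mem (hL : 𝒜.IsGradedField) {x : L}
    (hi : IntegralOver C x) (hx : x ∈ 𝒜.fracIn C) :
    ∃ s ∈ C, 𝒜.IsHomog s ∧ IsUnit s ∧ ∀ n : ℕ, s * x ^ n ∈ C := by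
  rw [GradedStr.fracIn_eq_localizationIn hL] at hx
  obtain ⟨s, hs, hsx⟩ := exists_forall_smul_pow_mem_of_isIntegral hx (integralOver_iff.1 hi)
  refine ⟨s, s.2, hs.1, hs.2, fun n => ?_⟩
  obtain ⟨c, hc : (c : L) = s * x ^ n⟩ := hsx n
  exact hc ▸ c.2

end Integrality

namespace GradedStr

section PolynomialComponents

open Polynomial

variable {𝒜 : GradedStr G L} {K : Subring L} {t : L} {g₀ : G}

/-- The component of grading `h` of a polynomial over the graded subring `K`, when the variable is
given the grading `g₀`. -/
noncomputable def polyComp (hK : 𝒜.IsGradedSubring K) (g₀ : G) (p : K[X]) (h : G) : K[X] :=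
  ∑ n ∈ p.support, monomial n ⟨𝒜.comp (p.coeff n) (h * (g₀ ^ n)⁻¹), hK _ (p.coeff n).2 _⟩

theorem coeff_polyComp (hK : 𝒜.IsGradedSubring K) (p : K[X]) (h : G) (n : ℕ) :
    ((polyComp hK g₀ p h).coeff n : L) = 𝒜.comp (p.coeff n) (h * (g₀ ^ n)⁻¹) := by
  rw [polyComp, finsetSum_coeff]
  simp only [coeff_monomial, Finset.sum_ite_eq']
  split_ifs with hn
  · rfl
  · rw [notMem_support_iff.1 hn, ZeroMemClass.coe_zero, comp_zero]

theorem map_polyComp_mem_polyDeg (hK : 𝒜.IsGradedSubring K) (p : K[X]) (h : G) :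
    (polyComp hK g₀ p h).map K.subtype ∈ 𝒜.polyDeg g₀ h := by
  intro n
  rw [coeff_map, Subring.subtype_apply, coeff_polyComp]
  exact 𝒜.comp_mem _ _

theorem degree_polyComp_le (hK : 𝒜.IsGradedSubring K) (p : K[X]) (h : G) :
    (polyComp hK g₀ p h).degree ≤ p.degree := by
  refine degree_mono fun n hn => ?_
  contrapose! hn
  rw [notMem_support_iff] at hn ⊢
  exact Subtype.ext (by rw [coeff_polyComp, hn, ZeroMemClass.coe_zero, comp_zero])

theorem aeval_polyComp (hK : 𝒜.IsGradedSubring K) (ht : t ∈ 𝒜.deg g₀) (p : K[X]) (h : G) :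
    aeval t (polyComp hK g₀ p h) = 𝒜.comp (aeval t p) h := by
  conv_rhs => rw [aeval_def, eval₂_eq_sum, Polynomial.sum, comp_sum]
  rw [polyComp, map_sum]
  refine Finset.sum_congr rfl fun n _ => ?_
  rw [aeval_monomial, mul_comm (algebraMap K L (p.coeff n)), comp_mul_of_mem (pow_mem ht n),
    mul_comm _ h, mul_comm (t ^ n)]
  rfl

theorem aeval_mem_deg (ht : t ∈ 𝒜.deg g₀) {p : K[X]} {h : G}
    (hp : p.map K.subtype ∈ 𝒜.polyDeg g₀ h) : aeval t p ∈ 𝒜.deg h := by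
  rw [aeval_eq_sum_range]
  refine sum_mem fun n _ => ?_
  have hpn := 𝒜.mul_mem (hp n) (pow_mem ht n)
  rwa [inv_mul_cancel_right, coeff_map] at hpn

theorem exists_homog_poly_of_mem_adjoin (hK : 𝒜.IsGradedSubring K) (ht : t ∈ 𝒜.deg g₀) {x : L}
    {h : G} (hx : x ∈ 𝒜.deg h) (hxK : x ∈ Algebra.adjoin K {t}) :
    ∃ p : K[X], p.map K.subtype ∈ 𝒜.polyDeg g₀ h ∧ aeval t p = x := by
  rw [Algebra.adjoin_singleton_eq_range_aeval] at hxK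
  obtain ⟨p, rfl⟩ := hxK
  exact ⟨polyComp hK g₀ p h, map_polyComp_mem_polyDeg hK p h,
    (aeval_polyComp hK ht p h).trans (𝒜.comp_of_mem hx)⟩

end PolynomialComponents

section Descent

open Polynomial

variable {𝒜 : GradedStr G L} {K : Subring L} {t x : L} {g₀ g h : G}

theorem IsGradedSubfield.isUnit (hL : 𝒜.IsGradedField) (hK : 𝒜.IsGradedSubfield K) {a : K}
    (ha : 𝒜.IsHomog (a : L)) (ha0 : a ≠ 0) : IsUnit a := by
  have ha0' : (a : L) ≠ 0 := mt (fun h => Subtype.ext h) ha0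
  exact IsUnit.of_mul_eq_one ⟨_, hK.2 a a.2 ha ha0'⟩
    (Subtype.ext (Ring.mul_inverse_cancel _ (hL.2 _ ha ha0')))

theorem exists_homog_remainder (hL : 𝒜.IsGradedField) (hK : 𝒜.IsGradedSubfield K)
    (ht : t ∈ 𝒜.deg g₀) (hx : x ∈ 𝒜.deg g) {c : K[X]} (hc : c.map K.subtype ∈ 𝒜.polyDeg g₀ h)
    (hc0 : c ≠ 0) (hcx : aeval t c * x ∈ Algebra.adjoin K {t}) :
    ∃ q ∈ Algebra.adjoin K {t}, ∃ r : K[X], r.map K.subtype ∈ 𝒜.polyDeg g₀ (h * g) ∧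
      r.degree < c.degree ∧ aeval t r = aeval t c * (x - q) := by
  have := hL.1
  rw [Algebra.adjoin_singleton_eq_range_aeval] at hcx ⊢
  obtain ⟨f, hf⟩ := hcx
  have hlc : IsUnit c.leadingCoeff := hK.isUnit hL
    ⟨_, coeff_map K.subtype c.natDegree ▸ hc c.natDegree⟩ (leadingCoeff_ne_zero.2 hc0)
  obtain ⟨q, r, rfl, hr⟩ := exists_eq_mul_add_degree_lt hlc f
  have hct := aeval_mem_deg ht hc
  refine ⟨_, ⟨polyComp hK.1 g₀ q g, rfl⟩, polyComp hK.1 g₀ r (h * g),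
    map_polyComp_mem_polyDeg _ _ _, (degree_polyComp_le _ _ _).trans_lt hr, ?_⟩
  have hrt : aeval t r = aeval t c * x - aeval t c * aeval t q := by
    rw [← map_mul, eq_sub_iff_add_eq', ← map_add]
    exact hf
  change _ = aeval t c * (x - aeval t (polyComp hK.1 g₀ q g))
  rw [aeval_polyComp _ ht, aeval_polyComp _ ht, hrt, comp_sub, comp_mul_of_mem hct,
    comp_mul_of_mem hct, inv_mul_cancel_left, 𝒜.comp_of_mem hx, mul_sub]

/- The remainder `r(t) = c(t) (x - q)` again clears the denominators of all powers of `x`, since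
`q` lies in `K[t]`. -/
theorem mem_adjoin_of_forall_aeval_mul_pow_mem (hL : 𝒜.IsGradedField)
    (hK : 𝒜.IsGradedSubfield K) (ht : t ∈ 𝒜.deg g₀) (hx : x ∈ 𝒜.deg g) {c : K[X]}
    (hc : c.map K.subtype ∈ 𝒜.polyDeg g₀ h) (hct : aeval t c ≠ 0)
    (hcx : ∀ m : ℕ, aeval t c * x ^ m ∈ Algebra.adjoin K {t}) : x ∈ Algebra.adjoin K {t} := by
  induction hd : c.degree using WellFoundedLT.induction generalizing c h with
  | ind d ih =>
    have hc0 : c ≠ 0 := by rintro rfl; exact hct (map_zero _)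
    obtain ⟨q, hq, r, hr, hrc, hrt⟩ :=
      exists_homog_remainder hL hK ht hx hc hc0 (by simpa only [pow_one] using hcx 1)
    by_cases hr0 : aeval t r = 0
    · have hxq : x = q := sub_eq_zero.1 <|
        (hL.2 _ ⟨h, aeval_mem_deg ht hc⟩ hct).mul_right_eq_zero.1 (hrt.symm.trans hr0)
      rwa [hxq]
    · refine ih _ (hd ▸ hrc) hr hr0 (fun m => ?_) rfl
      have hrx : aeval t r * x ^ m = aeval t c * x ^ (m + 1) - q * (aeval t c * x ^ m) := by
        rw [hrt]; ring
      exact hrx ▸ sub_mem (hcx _) (Subalgebra.mul_mem _ hq (hcx m))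

end Descent

end GradedStr

section Adjoin

open Polynomial

variable {𝒜 : GradedStr G L} {B : Subring L} {t x : L}

theorem adjoin_toSubring_eq_closure (B : Subring L) (s : Set L) :
    (Algebra.adjoin B s).toSubring = Subring.closure (B ∪ s) := by
  rw [Algebra.adjoin_eq_ring_closure]
  exact congrArg (Subring.closure <| · ∪ s) Subtype.range_coe

theorem closure_union_adjoin {C : Subring L} (B : Subring L) {s : Set L} (hs : s ⊆ C) :
    Subring.closure ((C : Set L) ∪ (Algebra.adjoin B s).toSubring) = Subring.closure (C ∪ B) := by
  rw [adjoin_toSubring_eq_closure]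
  simp only [Subring.closure_union, Subring.closure_eq]
  rw [sup_left_comm, sup_eq_left.2 (Subring.closure_le.2 hs), sup_comm]

theorem adjoin_adjoin_toSubring_singleton (B : Subring L) (s : Set L) (t : L) :
    (Algebra.adjoin (Algebra.adjoin B s).toSubring {t}).toSubring =
      (Algebra.adjoin B (insert t s)).toSubring := by
  simp only [adjoin_toSubring_eq_closure, Subring.closure_union, Subring.closure_eq,
    Set.insert_eq t s, sup_assoc, sup_comm (Subring.closure {t})]

theorem mem_adjoin_fracIn_of_integralOver_adjoin (hL : 𝒜.IsGradedField)
    (hB : 𝒜.IsGradedSubring B) (ht : 𝒜.IsHomog t) (hx : 𝒜.IsHomog x)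
    (hxfrac : x ∈ 𝒜.fracIn (Algebra.adjoin B {t}).toSubring)
    (hxint : IntegralOver (Algebra.adjoin B {t}).toSubring x) :
    x ∈ Algebra.adjoin (𝒜.fracIn B) {t} := by
  have hK := hB.fracIn hL
  have hle : (Algebra.adjoin B {t}).toSubring ≤ (Algebra.adjoin (𝒜.fracIn B) {t}).toSubring := by
    simp only [adjoin_toSubring_eq_closure]
    exact Subring.closure_mono (Set.union_subset_union_left _ (𝒜.le_fracIn B))
  obtain ⟨s, hs, ⟨h, hsh⟩, hsu, hsx⟩ := hxint.exists_homog_forall_mul_pow_mem hL hxfrac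
  obtain ⟨g₀, ht⟩ := ht
  obtain ⟨g, hx⟩ := hx
  have := hL.1
  obtain ⟨c, hc, rfl⟩ := GradedStr.exists_homog_poly_of_mem_adjoin hK.1 ht hsh (hle hs)
  exact GradedStr.mem_adjoin_of_forall_aeval_mul_pow_mem hL hK ht hx hc hsu.ne_zero
    fun m => hle (hsx m)

theorem transcendental_fracIn (hL : 𝒜.IsGradedField) (ht : Transcendental B t) :
    Transcendental (𝒜.fracIn B) t := by
  have hM (s : B) (hs : s ∈ 𝒜.homogUnits B) : IsUnit (algebraMap B L s) := hs.2
  have := isLocalization_localizationIn hM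
  rw [GradedStr.fracIn_eq_localizationIn hL]
  exact transcendental_of_isLocalization (S := localizationIn L (𝒜.homogUnits B))
    (𝒜.homogUnits B) ht

theorem GIntegrallyClosedIn.adjoin_singleton (hL : 𝒜.IsGradedField)
    (hBic : GIntegrallyClosedIn 𝒜 B) (hB : 𝒜.IsGradedSubring B) (ht : 𝒜.IsHomog t)
    (htr : Transcendental B t) : GIntegrallyClosedIn 𝒜 (Algebra.adjoin B {t}).toSubring := by
  refine (gIntegrallyClosedIn_iff hL).2 fun x hx hxfrac hxint => ?_
  have hxK := mem_adjoin_fracIn_of_integralOver_adjoin hL hB ht hx hxfrac hxint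
  obtain ⟨g₀, ht⟩ := ht
  obtain ⟨g, hx⟩ := hx
  obtain ⟨p, hp, rfl⟩ := GradedStr.exists_homog_poly_of_mem_adjoin (hB.fracIn hL).1 ht hx hxK
  let := (Subring.inclusion (𝒜.le_fracIn B)).toAlgebra
  have : IsScalarTower B (𝒜.fracIn B) L := .of_algebraMap_eq fun _ => rfl
  have hcoeff (n : ℕ) : (p.coeff n : L) ∈ B := by
    have hint : IsIntegral B (p.coeff n) :=
      isIntegral_coeff_of_isIntegral_aeval (transcendental_fracIn hL htr)
        (integralOver_iff.1 hxint) n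
    exact (gIntegrallyClosedIn_iff hL).1 hBic _ ⟨_, coeff_map (𝒜.fracIn B).subtype n ▸ hp n⟩
      (p.coeff n).2 (integralOver_iff.2 hint.algebraMap)
  rw [aeval_eq_sum_range]
  exact sum_mem fun n _ => Subalgebra.smul_mem _
    (Subalgebra.pow_mem _ (Algebra.self_mem_adjoin_singleton B t) n) (⟨_, hcoeff n⟩ : B)

theorem GIntegrallyClosedIn.iSup_of_directed {ι : Type*} [Nonempty ι] {C : ι → Subring L}
    (hdir : Directed (· ≤ ·) C) (hC : ∀ i, GIntegrallyClosedIn 𝒜 (C i)) :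
    GIntegrallyClosedIn 𝒜 (⨆ i, C i) := by
  classical
  rintro x hx ⟨a, ha, b, hb, hah, hbh, hb0, hxb⟩ ⟨p, hp, hpC, hpx⟩
  have hsub : ((insert a (insert b p.coeffs) : Finset L) : Set L) ⊆ ⋃ i, (C i : Set L) := by
    rw [← Subring.coe_iSup_of_directed hdir]
    simp only [Finset.coe_insert, Set.insert_subset_iff]
    refine ⟨ha, hb, fun c hc => ?_⟩
    obtain ⟨n, -, rfl⟩ := mem_coeffs_iff.1 hc
    exact hpC n
  obtain ⟨i, hi⟩ := hdir.exists_mem_subset_of_finset_subset_biUnion hsub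
  simp only [Finset.coe_insert, Set.insert_subset_iff] at hi
  obtain ⟨hai, hbi, hpi⟩ := hi
  refine le_iSup C i (hC i x hx ⟨a, hai, b, hbi, hah, hbh, hb0, hxb⟩ ⟨p, hp, fun n => ?_, hpx⟩)
  by_cases hn : p.coeff n = 0
  · exact hn ▸ (C i).zero_mem
  · exact hpi (coeff_mem_coeffs hn)

variable {ι : Type*} {T : ι → L}

theorem algIndepOver_iff : AlgIndepOver B T ↔ AlgebraicIndependent B T := Iff.rfl

theorem GIntegrallyClosedIn.adjoin_image_finset (hL : 𝒜.IsGradedField)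
    (hBic : GIntegrallyClosedIn 𝒜 B) (hB : 𝒜.IsGradedSubring B) (hT : ∀ i, 𝒜.IsHomog (T i))
    (hind : AlgebraicIndependent B T) (s : Finset ι) :
    GIntegrallyClosedIn 𝒜 (Algebra.adjoin B (T '' s)).toSubring := by
  classical
  induction s using Finset.induction_on with
  | empty => simpa [adjoin_toSubring_eq_closure] using hBic
  | insert i s hi ih =>
    rw [Finset.coe_insert, Set.image_insert_eq, ← adjoin_adjoin_toSubring_singleton]
    refine ih.adjoin_singleton hL (hB.adjoin ?_) (hT i) (hind.transcendental_adjoin hi)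
    rintro _ ⟨j, -, rfl⟩
    exact hT j

theorem adjoin_range_toSubring_eq_iSup (B : Subring L) (T : ι → L) :
    (Algebra.adjoin B (Set.range T)).toSubring =
      ⨆ s : Finset ι, (Algebra.adjoin B (T '' s)).toSubring := by
  refine le_antisymm ?_ (iSup_le fun s => Algebra.adjoin_mono (Set.image_subset_range T s))
  rw [adjoin_toSubring_eq_closure, Subring.closure_le]
  rintro x (hx | ⟨i, rfl⟩)
  · exact le_iSup (fun s : Finset ι => (Algebra.adjoin B (T '' s)).toSubring) ∅
      (Subalgebra.algebraMap_mem _ (⟨x, hx⟩ : B))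
  · exact le_iSup (fun s : Finset ι => (Algebra.adjoin B (T '' s)).toSubring) {i}
      (Algebra.subset_adjoin (Set.mem_image_of_mem T (Finset.mem_singleton_self i)))

theorem GIntegrallyClosedIn.adjoin_range (hL : 𝒜.IsGradedField)
    (hBic : GIntegrallyClosedIn 𝒜 B) (hB : 𝒜.IsGradedSubring B) (hT : ∀ i, 𝒜.IsHomog (T i))
    (hind : AlgebraicIndependent B T) :
    GIntegrallyClosedIn 𝒜 (Algebra.adjoin B (Set.range T)).toSubring := by
  rw [adjoin_range_toSubring_eq_iSup]
  refine iSup_of_directed (Monotone.directed_le fun s s' hss' => ?_)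
    (hBic.adjoin_image_finset hL hB hT hind)
  exact Algebra.adjoin_mono (Set.image_mono hss')

end Adjoin

section FractionFieldProduct

variable {𝒜 : GradedStr G L} {B C : Subring L}

theorem fracIn_localizationIn_le (hL : 𝒜.IsGradedField) {M : Submonoid B}
    (hM : M ≤ 𝒜.homogUnits B) : 𝒜.fracIn (localizationIn L M).toSubring ≤ 𝒜.fracIn B := by
  intro x hx
  obtain ⟨s, hs, hsh, hsu, hsx⟩ := (GradedStr.mem_fracIn hL).1 hx
  obtain ⟨m, hm, r, hr⟩ := mem_localizationIn.1 hs
  obtain ⟨m', hm', r', hr'⟩ := mem_localizationIn.1 hsx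
  have hr : (m : L) * s = r := hr
  have hr' : (m' : L) * (s * x) = r' := hr'
  refine (GradedStr.mem_fracIn hL).2 ⟨m' * m * s, ?_, ((hM hm').1.mul (hM hm).1).mul hsh,
    ((hM hm').2.mul (hM hm).2).mul hsu, ?_⟩
  · exact mul_assoc (m' : L) m s ▸ hr ▸ mul_mem m'.2 r.2
  · rw [show (m' * m * s * x : L) = m * (m' * (s * x)) by ring, hr']
    exact mul_mem m.2 r'.2

theorem GIntegrallyClosedIn.localization (hL : 𝒜.IsGradedField) (hB : GIntegrallyClosedIn 𝒜 B)
    {M : Submonoid B} (hM : M ≤ 𝒜.homogUnits B) :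
    GIntegrallyClosedIn 𝒜 (localizationIn L M).toSubring := by
  refine (gIntegrallyClosedIn_iff hL).2 fun x hx hxfrac hxint => ?_
  have := isLocalization_localizationIn (E := L) fun s hs => (hM hs).2
  have hxint : IsIntegral (localizationIn L M) x := integralOver_iff.1 hxint
  obtain ⟨⟨m, hmM⟩, hm⟩ := hxint.exists_multiple_integral_of_isLocalization M x
  have hxB := fracIn_localizationIn_le hL hM hxfrac
  refine mem_localizationIn.2 ⟨m, hmM, ⟨m * x, ?_⟩, rfl⟩
  exact (gIntegrallyClosedIn_iff hL).1 hB _ ((hM hmM).1.mul hx)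
    (mul_mem (𝒜.le_fracIn B m.2) hxB) (integralOver_iff.2 hm)

theorem closure_fracIn_union_eq_localizationIn (hL : 𝒜.IsGradedField) (hCB : C ≤ B) :
    Subring.closure ((𝒜.fracIn C : Set L) ∪ B) =
      (localizationIn L ((𝒜.homogUnits C).map (Subring.inclusion hCB))).toSubring := by
  refine le_antisymm (Subring.closure_le.2 (Set.union_subset ?_ ?_)) fun x hx => ?_
  · intro x hx
    obtain ⟨s, hs, hsh, hsu, hsx⟩ := (GradedStr.mem_fracIn hL).1 hx
    exact mem_localizationIn.2
      ⟨⟨s, hCB hs⟩, ⟨⟨s, hs⟩, ⟨hsh, hsu⟩, rfl⟩, ⟨s * x, hCB hsx⟩, rfl⟩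
  · exact fun b hb => (localizationIn L _).algebraMap_mem (⟨b, hb⟩ : B)
  · obtain ⟨_, ⟨s, ⟨hsh, hsu⟩, rfl⟩, r, hr⟩ := mem_localizationIn.1 hx
    have hr : (s : L) * x = r := hr
    have := hL.1
    rw [← Ring.inverse_mul_cancel_left _ x hsu, hr]
    exact mul_mem (Subring.subset_closure (.inl (Subring.subset_closure
      (.inr ⟨s, s.2, hsu.ne_zero, hsh, rfl⟩)))) (Subring.subset_closure (.inr r.2))

end FractionFieldProduct

theorem FA_integrally_closed_general
    (𝒜 : GradedStr G L) (hL : 𝒜.IsGradedField) (k A : Subring L) (hkA : k ≤ A)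
    (hAgr : 𝒜.IsGradedSubring A) (hAic : GIntegrallyClosedIn 𝒜 A)
    {ι : Type*} (T : ι → L) (hT : ∀ i, 𝒜.IsHomog (T i)) (hTind : AlgIndepOver A T) :
    GIntegrallyClosedIn 𝒜
      (Subring.closure
        ((𝒜.fracIn (Subring.closure (↑k ∪ Set.range T)) : Set L) ∪ ↑A)) := by
  have hTF : Set.range T ⊆ 𝒜.fracIn (Subring.closure (k ∪ Set.range T)) :=
    Set.subset_union_right.trans (Subring.subset_closure.trans (𝒜.le_fracIn _))
  have hkT : Subring.closure (k ∪ Set.range T) ≤ (Algebra.adjoin A (Set.range T)).toSubring := by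
    rw [adjoin_toSubring_eq_closure]
    exact Subring.closure_mono (Set.union_subset_union_left _ hkA)
  rw [← closure_union_adjoin A hTF, closure_fracIn_union_eq_localizationIn hL hkT]
  refine (hAic.adjoin_range hL hAgr hT (algIndepOver_iff.1 hTind)).localization hL ?_
  rintro _ ⟨s, hs, rfl⟩
  exact hs

/-- Let `L/k` be an extension of `G`-graded fields, `A ⊆ L` an
integrally closed graded `k`-subalgebra, `T = {T_i}` a family of nonzero homogeneous
elements of `L` algebraically independent over `A`, and `F = Frac_G(k[T]) ⊆ L`.
Then the graded subring `F·A ⊆ L` generated by `F` and `A` is integrally closed. -/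
theorem FA_integrally_closed
    (𝒜 : GradedStr G L) (hL : 𝒜.IsGradedField)
    (k : Subring L) (hk : 𝒜.IsGradedSubfield k)
    (A : Subring L) (hkA : k ≤ A) (hAgr : 𝒜.IsGradedSubring A)
    (hAic : GIntegrallyClosedIn 𝒜 A)
    {I : Type v} (T : I → L) (hT : ∀ i, 𝒜.IsHomog (T i) ∧ T i ≠ 0)
    (hTind : AlgIndepOver A T) :
    GIntegrallyClosedIn 𝒜
      (Subring.closure
        ((𝒜.fracIn (Subring.closure (↑k ∪ Set.range T)) : Set L) ∪ ↑A)) :=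
  FA_integrally_closed_general 𝒜 hL k A hkA hAgr hAic T (fun i => (hT i).1) hTind

end Statement12
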